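/- Let X be a locally compact Hausdorff space and let k be a symmetric positive definite kernel on X that is bounded and continuous on X × X, with RKHS H. Then k is cc-universal if and only if ∫_X ∫_X k(x,y) dμ(x) dμ(y) > 0 for every nonzero μ ∈ M_bc(X). -/

import Mathlib

open MeasureTheory Filter Topology RealInnerProductSpace

/-- Integral of a vector-valued function with respect to a finite signed measure,
defined via the Jordan decomposition. -/
noncomputable def svInt {X : Type*} [MeasurableSpace X] {E : Type*}
    [NormedAddCommGroup E] [NormedSpace ℝ E]
    (μ : MeasureTheory.SignedMeasure X) (f : X → E) : E :=
  (∫ x, f x ∂μ.toJordanDecomposition.posPart) - ∫ x, f x ∂μ.toJordanDecomposition.negPart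

/-! For a compact `Z`, the Hahn–Banach and Riesz–Markov theorems show that the functions of `H`
are dense in `C(Z, ℝ)` iff no nonzero signed Radon measure carried by `Z` annihilates all of them.
For such a measure `μ`, the double integral of the kernel is `‖m‖ ^ 2`, where the mean
embedding `m = ∫ Φ dμ` (in the completion of `H`) satisfies `⟪f, m⟫ = ∫ ⟪f, Φ x⟫ dμ(x)`; so it is
positive unless `μ` annihilates `H`. -/

theorem dense_submodule_iff_forall_strongDual_eq_zero {E : Type*} [AddCommGroup E] [Module ℝ E]
    [TopologicalSpace E] [IsTopologicalAddGroup E] [ContinuousSMul ℝ E] [LocallyConvexSpace ℝ E]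
    (S : Submodule ℝ E) :
    Dense (S : Set E) ↔ ∀ φ : StrongDual ℝ E, (∀ f ∈ S, φ f = 0) → φ = 0 := by
  refine ⟨fun hS φ hφ => ?_, fun h => ?_⟩
  · exact DFunLike.coe_injective (φ.continuous.ext_on hS continuous_const hφ)
  · rw [Submodule.dense_iff_topologicalClosure_eq_top, Submodule.eq_top_iff']
    by_contra! ⟨g, hg⟩
    obtain ⟨φ, u, hφ, hu⟩ := geometric_hahn_banach_closed_point S.topologicalClosure.convex
      S.isClosed_topologicalClosure hg
    have hu_pos : 0 < u := by simpa only [map_zero] using hφ 0 (zero_mem _)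
    have hφS : ∀ f ∈ S, φ f = 0 := fun f hf => by
      by_contra hne
      have hlt := hφ ((u / φ f) • f) (S.le_topologicalClosure (S.smul_mem _ hf))
      rw [map_smul, smul_eq_mul, div_mul_cancel₀ _ hne] at hlt
      exact lt_irrefl u hlt
    rw [h φ hφS, zero_apply] at hu
    exact lt_asymm hu hu_pos

section OrderUnit

variable {E : Type*} [AddCommGroup E] [PartialOrder E] [IsOrderedAddMonoid E] [Module ℝ E]
  [IsOrderedModule ℝ E] {e : E} {C : ℝ}

theorem map_le_mul_of_le_smul (he : 0 < e) (L : E →ₗ[ℝ] ℝ)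
    (hL : ∀ g, 0 ≤ g → g ≤ e → L g ≤ C) {c : ℝ} {g : E} (hg : 0 ≤ g) (hgc : g ≤ c • e) :
    L g ≤ c * C := by
  rcases lt_trichotomy c 0 with hc | rfl | hc
  · have hneg := smul_nonneg (inv_nonneg.2 (neg_nonneg.2 hc.le)) (hg.trans hgc)
    rw [inv_neg, neg_smul, inv_smul_smul₀ hc.ne, neg_nonneg] at hneg
    exact absurd hneg he.not_ge
  · rw [zero_smul] at hgc
    rw [le_antisymm hgc hg, map_zero, zero_mul]
  · have hscaled := hL (c⁻¹ • g) (smul_nonneg (inv_nonneg.2 hc.le) hg)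
      ((inv_smul_le_iff_of_pos hc).2 hgc)
    rwa [map_smul, smul_eq_mul, inv_mul_le_iff₀ hc] at hscaled

-- The functional `(c • e, g) ↦ c * C - L g` is nonnegative on the pairs `(f, g)` with
-- `0 ≤ g ≤ f`; the values at `(f, 0)` of a positive extension `ψ` to `E × E` define `p`.
theorem exists_positiveLinearMap_ge (he : 0 < e) (hunit : ∀ f : E, ∃ c : ℝ, f ≤ c • e)
    (L : E →ₗ[ℝ] ℝ) (hL : ∀ g, 0 ≤ g → g ≤ e → L g ≤ C) :
    ∃ p : E →ₚ[ℝ] ℝ, ∀ f, 0 ≤ f → L f ≤ p f := by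
  let s : PointedCone ℝ (E × E) :=
    (PointedCone.positive ℝ (E × E)).comap
      ((LinearMap.snd ℝ E E).prod (LinearMap.fst ℝ E E - LinearMap.snd ℝ E E))
  have mem_s (f g : E) : (f, g) ∈ s ↔ 0 ≤ g ∧ g ≤ f := by
    simp [s, PointedCone.mem_comap, Prod.le_def]
  let φ : E × E →ₗ.[ℝ] ℝ :=
    (LinearPMap.mkSpanSingleton e C he.ne').coprod ((-L).toPMap ⊤)
  have hφ (c : ℝ) (g : E) (h : (c • e, g) ∈ φ.domain) : φ ⟨(c • e, g), h⟩ = c * C - L g := by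
    simp only [φ, LinearPMap.coprod_apply, sub_eq_add_neg]
    exact congrArg (· + -L g) (LinearPMap.mkSpanSingleton'_apply e C _ c _)
  have mem_φ (c : ℝ) (g : E) : (c • e, g) ∈ φ.domain :=
    ⟨Submodule.smul_mem _ c (Submodule.mem_span_singleton_self e), Submodule.mem_top⟩
  have φ_nonneg : ∀ x : φ.domain, (x : E × E) ∈ s → 0 ≤ φ x := by
    rintro ⟨⟨f, g⟩, hx⟩ hs
    obtain ⟨c, rfl⟩ := Submodule.mem_span_singleton.1 hx.1
    obtain ⟨hg, hgc⟩ := (mem_s _ _).1 hs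
    rw [hφ, sub_nonneg]
    exact map_le_mul_of_le_smul he L hL hg hgc
  have φ_dom_cofinal : ∀ y : E × E, ∃ x : φ.domain, (x : E × E) + y ∈ s := by
    rintro ⟨f, g⟩
    obtain ⟨c, hc⟩ := hunit (-f)
    refine ⟨⟨(c • e, -g), mem_φ c (-g)⟩, (mem_s _ _).2 ⟨?_, ?_⟩⟩
    · exact (neg_add_cancel g).ge
    · rw [neg_add_cancel]
      exact neg_le_iff_add_nonneg.1 hc
  obtain ⟨ψ, hψφ, hψ⟩ := riesz_extension s φ φ_nonneg φ_dom_cofinal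
  have hψL (g : E) : ψ (0, g) = -L g := by
    have h := hψφ ⟨((0 : ℝ) • e, g), mem_φ 0 g⟩
    rw [hφ] at h
    simpa only [zero_smul, zero_mul, zero_sub] using h
  have hψ_diag (f : E) : ψ (f, f) = ψ (f, 0) - L f := by
    rw [sub_eq_add_neg, ← hψL, ← map_add, Prod.mk_add_mk, add_zero, zero_add]
  refine ⟨.mk₀ (ψ ∘ₗ .inl ℝ E E) fun f hf => hψ _ ((mem_s f 0).2 ⟨le_rfl, hf⟩), fun f hf => ?_⟩
  exact sub_nonneg.1 (hψ_diag f ▸ hψ _ ((mem_s f f).2 ⟨hf, le_rfl⟩))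

theorem exists_positiveLinearMap_sub_eq (he : 0 < e) (hunit : ∀ f : E, ∃ c : ℝ, f ≤ c • e)
    (L : E →ₗ[ℝ] ℝ) (hL : ∀ g, 0 ≤ g → g ≤ e → L g ≤ C) :
    ∃ p q : E →ₚ[ℝ] ℝ, ∀ f, L f = p f - q f := by
  obtain ⟨p, hp⟩ := exists_positiveLinearMap_ge he hunit L hL
  exact ⟨p, .mk₀ (p.toLinearMap - L) fun f hf => sub_nonneg.2 (hp f hf), fun f =>
    (sub_sub_cancel (p f) (L f)).symm⟩

end OrderUnit

theorem continuous_integral_continuousMap {Z : Type*} [TopologicalSpace Z]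
    [CompactSpace Z] [MeasurableSpace Z] [BorelSpace Z] (P : Measure Z) [IsFiniteMeasure P] :
    Continuous fun f : C(Z, ℝ) => ∫ x, f x ∂P := by
  have h := continuous_integral.comp (ContinuousMap.toLp (E := ℝ) 1 P ℝ).continuous
  exact h.congr fun f => integral_congr_ae (ContinuousMap.coeFn_toLp P f)

section CompactSpace

variable {Z : Type*} [TopologicalSpace Z] [T2Space Z] [CompactSpace Z] [MeasurableSpace Z]
  [BorelSpace Z]

theorem exists_regular_integral_eq (p : C(Z, ℝ) →ₚ[ℝ] ℝ) :
    ∃ P : Measure Z, IsFiniteMeasure P ∧ P.Regular ∧ ∀ f, p f = ∫ x, f x ∂P := by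
  let Λ : CompactlySupportedContinuousMap Z ℝ →ₚ[ℝ] ℝ :=
    { toFun f := p f.toContinuousMap
      map_add' f g := map_add p f.toContinuousMap g.toContinuousMap
      map_smul' c f := map_smul p c f.toContinuousMap
      monotone' _ _ hfg := p.monotone' hfg }
  exact ⟨RealRMK.rieszMeasure Λ, inferInstance, inferInstance, fun f =>
    (RealRMK.integral_rieszMeasure Λ
      (CompactlySupportedContinuousMap.continuousMapEquiv f)).symm⟩

theorem exists_regular_sub_integral_eq (L : StrongDual ℝ C(Z, ℝ)) :
    ∃ P N : Measure Z, IsFiniteMeasure P ∧ IsFiniteMeasure N ∧ P.Regular ∧ N.Regular ∧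
      ∀ f, L f = ∫ x, f x ∂P - ∫ x, f x ∂N := by
  rcases isEmpty_or_nonempty Z with hZ | hZ
  · exact ⟨0, 0, inferInstance, inferInstance, inferInstance, inferInstance, fun f => by
      simp [Subsingleton.elim f 0]⟩
  have le_norm_smul_one (f : C(Z, ℝ)) : ∃ c : ℝ, f ≤ c • 1 :=
    ⟨‖f‖, fun x => by simpa using (le_abs_self _).trans (f.norm_coe_le_norm x)⟩
  have hL (g : C(Z, ℝ)) (hg : 0 ≤ g) (hg1 : g ≤ 1) : L g ≤ ‖L‖ := by
    have hnorm : ‖g‖ ≤ 1 := (ContinuousMap.norm_le _ zero_le_one).2 fun x =>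
      (Real.norm_of_nonneg (hg x)).trans_le (hg1 x)
    exact (le_abs_self _).trans (L.unit_le_opNorm g hnorm)
  obtain ⟨p, n, hpn⟩ :=
    exists_positiveLinearMap_sub_eq (zero_lt_one' C(Z, ℝ)) le_norm_smul_one L.toLinearMap hL
  obtain ⟨P, hP, hPreg, hPp⟩ := exists_regular_integral_eq p
  obtain ⟨N, hN, hNreg, hNn⟩ := exists_regular_integral_eq n
  exact ⟨P, N, hP, hN, hPreg, hNreg, fun f => by rw [← hPp, ← hNn]; exact hpn f⟩

theorem dense_submodule_iff_forall_regular_eq (S : Submodule ℝ C(Z, ℝ)) :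
    Dense (S : Set C(Z, ℝ)) ↔ ∀ P N : Measure Z, IsFiniteMeasure P → IsFiniteMeasure N →
      P.Regular → N.Regular → (∀ f ∈ S, ∫ x, f x ∂P = ∫ x, f x ∂N) → P = N := by
  refine ⟨fun hS P N _ _ _ _ hPN => ?_, fun h => ?_⟩
  · have hint := (continuous_integral_continuousMap P).ext_on hS
      (continuous_integral_continuousMap N) hPN
    exact Measure.ext_of_integral_eq_on_compactlySupported fun f =>
      congrFun hint f.toContinuousMap
  · refine (dense_submodule_iff_forall_strongDual_eq_zero S).2 fun L hL => ?_
    obtain ⟨P, N, hP, hN, hPreg, hNreg, hPN⟩ := exists_regular_sub_integral_eq L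
    obtain rfl := h P N hP hN hPreg hNreg fun f hf => sub_eq_zero.1 (hPN f ▸ hL f hf)
    ext f
    rw [hPN, sub_self, zero_apply]

end CompactSpace

section SignedMeasure

variable {X : Type*} [MeasurableSpace X]

theorem svInt_toSignedMeasure_sub {E : Type*} [NormedAddCommGroup E] [NormedSpace ℝ E]
    {P N : Measure X} [IsFiniteMeasure P] [IsFiniteMeasure N]
    {f : X → E} (hP : Integrable f P) (hN : Integrable f N) :
    svInt (P.toSignedMeasure - N.toSignedMeasure) f = ∫ x, f x ∂P - ∫ x, f x ∂N := by
  have hsub : (P - N) + N = P + (N - P) := by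
    rw [← Measure.toSignedMeasure_eq_toSignedMeasure_iff, Measure.toSignedMeasure_add,
      Measure.toSignedMeasure_add, ← sub_eq_sub_iff_add_eq_add]
    exact Measure.sub_toSignedMeasure_eq_toSignedMeasure_sub.symm
  have hPN : Integrable f (P - N) := hP.mono_measure Measure.sub_le
  have hNP : Integrable f (N - P) := hN.mono_measure Measure.sub_le
  rw [svInt, Measure.toJordanDecomposition_toSignedMeasure_sub,
    Measure.jordanDecompositionOfToSignedMeasureSub_posPart,
    Measure.jordanDecompositionOfToSignedMeasureSub_negPart, sub_eq_sub_iff_add_eq_add,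
    ← integral_add_measure hPN hN, hsub, integral_add_measure hP hNP]

theorem totalVariation_toSignedMeasure_sub_le (P N : Measure X) [IsFiniteMeasure P]
    [IsFiniteMeasure N] :
    (P.toSignedMeasure - N.toSignedMeasure).totalVariation ≤ P + N := by
  rw [SignedMeasure.totalVariation, Measure.toJordanDecomposition_toSignedMeasure_sub,
    Measure.jordanDecompositionOfToSignedMeasureSub_posPart,
    Measure.jordanDecompositionOfToSignedMeasureSub_negPart]
  exact add_le_add Measure.sub_le Measure.sub_le

theorem posPart_le_totalVariation (μ : SignedMeasure X) :
    μ.toJordanDecomposition.posPart ≤ μ.totalVariation :=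
  Measure.le_add_right le_rfl

theorem negPart_le_totalVariation (μ : SignedMeasure X) :
    μ.toJordanDecomposition.negPart ≤ μ.totalVariation :=
  Measure.le_add_left le_rfl

theorem eq_zero_of_posPart_eq_negPart {μ : SignedMeasure X}
    (h : μ.toJordanDecomposition.posPart = μ.toJordanDecomposition.negPart) : μ = 0 := by
  rw [← μ.toSignedMeasure_toJordanDecomposition, JordanDecomposition.toSignedMeasure]
  simp only [h, sub_self]

theorem integral_comap_subtype_val {E : Type*} [NormedAddCommGroup E] [NormedSpace ℝ E]
    {Z : Set X} {ν : Measure X} (hZ : MeasurableSet Z) (hν : ν Zᶜ = 0) (f : X → E) :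
    ∫ x, f x ∂ν.comap (Subtype.val : Z → X) = ∫ x, f x ∂ν := by
  rw [integral_subtype_comap hZ, Measure.restrict_eq_self_of_ae_mem (mem_ae_iff.2 hν)]

theorem map_subtype_val_compl {Z : Set X} (hZ : MeasurableSet Z) (Q : Measure Z) :
    Q.map Subtype.val Zᶜ = 0 := by
  rw [(MeasurableEmbedding.subtype_coe hZ).map_apply, Set.preimage_compl,
    Subtype.coe_preimage_self, Set.compl_univ, measure_empty]

theorem map_comap_subtype_val {Z : Set X} {ν : Measure X} (hZ : MeasurableSet Z)
    (hν : ν Zᶜ = 0) :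
    (ν.comap (Subtype.val : Z → X)).map Subtype.val = ν := by
  rw [map_comap_subtype_coe hZ, Measure.restrict_eq_self_of_ae_mem (mem_ae_iff.2 hν)]

variable {H : Type*} [NormedAddCommGroup H] [InnerProductSpace ℝ H] {μ : SignedMeasure X}
  {Φ : X → H}

theorem svInt_inner [CompleteSpace H] (hΦ : Integrable Φ μ.totalVariation) (f : H) :
    svInt μ (fun x => ⟪f, Φ x⟫) = ⟪f, svInt μ Φ⟫ := by
  rw [svInt, svInt, inner_sub_right,
    integral_inner (hΦ.mono_measure (posPart_le_totalVariation μ)),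
    integral_inner (hΦ.mono_measure (negPart_le_totalVariation μ))]

theorem svInt_svInt_inner_eq_norm_sq [CompleteSpace H] (hΦ : Integrable Φ μ.totalVariation) :
    svInt μ (fun x => svInt μ fun y => ⟪Φ x, Φ y⟫) = ‖svInt μ Φ‖ ^ 2 := by
  simp only [svInt_inner hΦ, real_inner_comm (svInt μ Φ), real_inner_self_eq_norm_sq]

theorem svInt_svInt_inner_pos_iff_of_denseRange {F : Type*} [NormedAddCommGroup F]
    [InnerProductSpace ℝ F] [CompleteSpace F] {ι : H →ₗᵢ[ℝ] F} (hι : DenseRange ι)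
    (hΦ : Integrable Φ μ.totalVariation) :
    0 < svInt μ (fun x => svInt μ fun y => ⟪Φ x, Φ y⟫) ↔
      ∃ f : H, svInt μ (fun x => ⟪f, Φ x⟫) ≠ 0 := by
  have hιΦ : Integrable (ι ∘ Φ) μ.totalVariation :=
    ι.toContinuousLinearMap.integrable_comp hΦ
  have hmean : svInt μ (ι ∘ Φ) = 0 ↔ ∀ f : H, ⟪ι f, svInt μ (ι ∘ Φ)⟫ = 0 :=
    ⟨fun h f => by rw [h, inner_zero_right], fun h => hι.eq_zero_of_inner_right ℝ h⟩
  calc 0 < svInt μ (fun x => svInt μ fun y => ⟪Φ x, Φ y⟫)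
      ↔ 0 < ‖svInt μ (ι ∘ Φ)‖ ^ 2 := by
        rw [← svInt_svInt_inner_eq_norm_sq hιΦ]
        simp only [Function.comp_apply, ι.inner_map_map]
    _ ↔ svInt μ (ι ∘ Φ) ≠ 0 := sq_pos_iff.trans norm_ne_zero_iff
    _ ↔ ∃ f : H, svInt μ (fun x => ⟪f, Φ x⟫) ≠ 0 := by
        rw [Ne, hmean, not_forall]
        simp only [← svInt_inner hιΦ, Function.comp_apply, ι.inner_map_map, Ne]

theorem svInt_svInt_inner_pos_iff (hΦ : Integrable Φ μ.totalVariation) :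
    0 < svInt μ (fun x => svInt μ fun y => ⟪Φ x, Φ y⟫) ↔
      ∃ f : H, svInt μ (fun x => ⟪f, Φ x⟫) ≠ 0 :=
  svInt_svInt_inner_pos_iff_of_denseRange (ι := UniformSpace.Completion.toComplₗᵢ)
    UniformSpace.Completion.denseRange_coe hΦ

end SignedMeasure

section Radon

variable {X : Type*} [TopologicalSpace X] [T2Space X] [MeasurableSpace X] [BorelSpace X]
  {Z : Set X}

theorem innerRegular_of_le {μ ν : Measure X} [IsFiniteMeasure ν] [ν.InnerRegular] (h : μ ≤ ν) :
    μ.InnerRegular := by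
  refine ⟨fun A hA r hr => ?_⟩
  obtain ⟨K, hKA, hK, hlt⟩ := hA.exists_isCompact_sdiff_lt (μ := ν) (measure_ne_top _ _)
    (tsub_pos_of_lt hr).ne'
  refine ⟨K, hKA, hK, ?_⟩
  by_contra! hle
  refine lt_irrefl (μ A) ?_
  calc μ A = μ K + μ (A \ K) := by
        rw [measure_add_sdiff hK.measurableSet.nullMeasurableSet, Set.union_eq_right.2 hKA]
    _ < r + (μ A - r) :=
        ENNReal.add_lt_add_of_le_of_lt (hle.trans_lt (hr.trans_le le_top)).ne hle
          ((h _).trans_lt hlt)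
    _ = μ A := add_tsub_cancel_of_le hr.le

theorem regular_comap_subtype_val (hZ : IsCompact Z) (ν : Measure X) [IsFiniteMeasure ν]
    [ν.InnerRegular] : (ν.comap (Subtype.val : Z → X)).Regular := by
  have : (ν.comap (Subtype.val : Z → X)).InnerRegular :=
    ⟨Measure.InnerRegularWRT.comap Measure.InnerRegular.innerRegular
      (MeasurableEmbedding.subtype_coe hZ.measurableSet)
      (fun U hU => (MeasurableEmbedding.subtype_coe hZ.measurableSet).measurableSet_image.2 hU)
      fun K hKr hK => IsInducing.subtypeVal.isCompact_preimage' hK hKr⟩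
  infer_instance

theorem integrable_of_continuous_of_isCompact {E : Type*} [NormedAddCommGroup E]
    {ν : Measure X} [IsFiniteMeasure ν] {f : X → E} (hf : Continuous f) (hZ : IsCompact Z)
    (hν : ν Zᶜ = 0) : Integrable f ν := by
  rw [← Measure.restrict_eq_self_of_ae_mem (mem_ae_iff.2 hν)]
  exact hf.continuousOn.integrableOn_compact hZ

theorem signedMeasure_eq_zero_of_forall_regular_eq (hZ : IsCompact Z) {S : Set C(X, ℝ)}
    (h : ∀ P N : Measure Z, IsFiniteMeasure P → IsFiniteMeasure N → P.Regular → N.Regular →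
      (∀ f ∈ S, ∫ x, f x ∂P = ∫ x, f x ∂N) → P = N)
    {μ : SignedMeasure X} (hμ : μ.totalVariation.InnerRegular) (hμZ : μ.totalVariation Zᶜ = 0)
    (hμS : ∀ f ∈ S, svInt μ f = 0) : μ = 0 := by
  have : CompactSpace Z := isCompact_iff_compactSpace.1 hZ
  have hpos := Measure.absolutelyContinuous_of_le (posPart_le_totalVariation μ) hμZ
  have hneg := Measure.absolutelyContinuous_of_le (negPart_le_totalVariation μ) hμZ
  have := innerRegular_of_le (posPart_le_totalVariation μ)
  have := innerRegular_of_le (negPart_le_totalVariation μ)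
  have hcomap : μ.toJordanDecomposition.posPart.comap (Subtype.val : Z → X) =
      μ.toJordanDecomposition.negPart.comap Subtype.val := by
    refine h _ _ inferInstance inferInstance (regular_comap_subtype_val hZ _)
      (regular_comap_subtype_val hZ _) fun f hf => ?_
    rw [integral_comap_subtype_val hZ.measurableSet hpos,
      integral_comap_subtype_val hZ.measurableSet hneg]
    exact sub_eq_zero.1 (hμS f hf)
  refine eq_zero_of_posPart_eq_negPart ?_
  rw [← map_comap_subtype_val hZ.measurableSet hpos, hcomap,
    map_comap_subtype_val hZ.measurableSet hneg]

theorem regular_eq_of_forall_signedMeasure_eq_zero (hZ : IsCompact Z) {S : Set C(X, ℝ)}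
    (h : ∀ μ : SignedMeasure X, μ.totalVariation.InnerRegular → μ.totalVariation Zᶜ = 0 →
      (∀ f ∈ S, svInt μ f = 0) → μ = 0)
    {P N : Measure Z} [IsFiniteMeasure P] [IsFiniteMeasure N] [P.Regular] [N.Regular]
    (hPN : ∀ f ∈ S, ∫ x, f x ∂P = ∫ x, f x ∂N) : P = N := by
  have : CompactSpace Z := isCompact_iff_compactSpace.1 hZ
  have hval : MeasurableEmbedding (Subtype.val : Z → X) := .subtype_coe hZ.measurableSet
  have hP := map_subtype_val_compl hZ.measurableSet P
  have hN := map_subtype_val_compl hZ.measurableSet N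
  have : (P.map (Subtype.val : Z → X)).InnerRegular := .map_of_continuous continuous_subtype_val
  have : (N.map (Subtype.val : Z → X)).InnerRegular := .map_of_continuous continuous_subtype_val
  have hle := totalVariation_toSignedMeasure_sub_le
    (P.map (Subtype.val : Z → X)) (N.map (Subtype.val : Z → X))
  have hsub : (P.map (Subtype.val : Z → X)).toSignedMeasure -
      (N.map (Subtype.val : Z → X)).toSignedMeasure = 0 := by
    refine h _ (innerRegular_of_le hle) (Measure.absolutelyContinuous_of_le hle ?_) fun f hf => ?_
    · rw [Measure.add_apply, hP, hN, add_zero]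
    · rw [svInt_toSignedMeasure_sub
          (integrable_of_continuous_of_isCompact f.continuous hZ hP)
          (integrable_of_continuous_of_isCompact f.continuous hZ hN),
        hval.integral_map, hval.integral_map, hPN f hf, sub_self]
  rw [sub_eq_zero, Measure.toSignedMeasure_eq_toSignedMeasure_iff] at hsub
  rw [← hval.comap_map P, hsub, hval.comap_map]

theorem forall_exists_abs_sub_le_iff_forall_signedMeasure_eq_zero (hZ : IsCompact Z)
    (S : Submodule ℝ C(X, ℝ)) :
    (∀ (g : C(Z, ℝ)) (ε : ℝ), 0 < ε → ∃ f ∈ S, ∀ x : Z, |f x - g x| ≤ ε) ↔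
      ∀ μ : SignedMeasure X, μ.totalVariation.InnerRegular → μ.totalVariation Zᶜ = 0 →
        (∀ f ∈ S, svInt μ f = 0) → μ = 0 := by
  have : CompactSpace Z := isCompact_iff_compactSpace.1 hZ
  let res : C(X, ℝ) →ₗ[ℝ] C(Z, ℝ) :=
    (ContinuousMap.compRightAlgHom ℝ ℝ ⟨Subtype.val, continuous_subtype_val⟩).toLinearMap
  have dist_res_le_iff (f : C(X, ℝ)) (g : C(Z, ℝ)) {ε : ℝ} (hε : 0 < ε) :
      dist (res f) g ≤ ε ↔ ∀ x : Z, |f x - g x| ≤ ε := ContinuousMap.dist_le hε.le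
  calc (∀ (g : C(Z, ℝ)) (ε : ℝ), 0 < ε → ∃ f ∈ S, ∀ x : Z, |f x - g x| ≤ ε)
      ↔ Dense (S.map res : Set C(Z, ℝ)) := by
        rw [Metric.dense_iff]
        refine ⟨fun h g ε hε => ?_, fun h g ε hε => ?_⟩
        · obtain ⟨f, hf, hfg⟩ := h g (ε / 2) (half_pos hε)
          exact ⟨res f, ((dist_res_le_iff f g (half_pos hε)).2 hfg).trans_lt (half_lt_self hε),
            Submodule.mem_map_of_mem hf⟩
        · obtain ⟨_, hfg, f, hf, rfl⟩ := h g ε hε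
          exact ⟨f, hf, (dist_res_le_iff f g hε).1 (le_of_lt hfg)⟩
    _ ↔ ∀ P N : Measure Z, IsFiniteMeasure P → IsFiniteMeasure N → P.Regular → N.Regular →
        (∀ f ∈ (S : Set C(X, ℝ)), ∫ x, f x ∂P = ∫ x, f x ∂N) → P = N := by
        simp only [dense_submodule_iff_forall_regular_eq, Submodule.mem_map,
          forall_exists_index, and_imp, forall_apply_eq_imp_iff₂, SetLike.mem_coe]
        rfl
    _ ↔ _ :=
        ⟨fun h _ hμ hμZ hμS => signedMeasure_eq_zero_of_forall_regular_eq hZ h hμ hμZ hμS,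
          fun h _ _ _ _ _ _ hPN => regular_eq_of_forall_signedMeasure_eq_zero hZ h hPN⟩

end Radon

section Kernel

variable {X : Type*} [TopologicalSpace X] {H : Type*} [NormedAddCommGroup H]
  [InnerProductSpace ℝ H]

theorem continuous_of_continuous_inner {Φ : X → H}
    (h : Continuous fun p : X × X => ⟪Φ p.1, Φ p.2⟫) : Continuous Φ := by
  refine continuous_iff_continuousAt.2 fun x => tendsto_iff_norm_sub_tendsto_zero.2 ?_
  have hdiag : Continuous fun y => ⟪Φ y, Φ y⟫ := h.comp (continuous_id.prodMk continuous_id)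
  have hx : Continuous fun y => ⟪Φ y, Φ x⟫ := h.comp (continuous_id.prodMk continuous_const)
  have hnorm (y : X) : ‖Φ y - Φ x‖ = √(⟪Φ y, Φ y⟫ - 2 * ⟪Φ y, Φ x⟫ + ⟪Φ x, Φ x⟫) := by
    rw [← Real.sqrt_sq (norm_nonneg _), norm_sub_sq_real, real_inner_self_eq_norm_sq,
      real_inner_self_eq_norm_sq]
  have hcont : Continuous fun y => ‖Φ y - Φ x‖ := by
    simp only [hnorm]
    fun_prop
  simpa only [sub_self, norm_zero] using hcont.tendsto x

/-- The linear map sending `f` to the function `x ↦ ⟪f, Φ x⟫`. When `Φ x` is the kernel section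
at `x`, this is the inclusion of the RKHS into the continuous functions. -/
noncomputable def innerEval (Φ : C(X, H)) : H →ₗ[ℝ] C(X, ℝ) where
  toFun f := ⟨fun x => ⟪f, Φ x⟫, by fun_prop⟩
  map_add' f g := ContinuousMap.ext fun x => inner_add_left f g (Φ x)
  map_smul' c f := ContinuousMap.ext fun x => real_inner_smul_left f (Φ x) c

theorem coe_innerEval (Φ : C(X, H)) (f : H) : ⇑(innerEval Φ f) = fun x => ⟪f, Φ x⟫ := rfl

end Kernel

theorem stmt4_general {X : Type*} [TopologicalSpace X] [T2Space X] [MeasurableSpace X]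
    [BorelSpace X] {H : Type*} [NormedAddCommGroup H] [InnerProductSpace ℝ H] (Φ : X → H)
    (hΦ : Continuous fun p : X × X => ⟪Φ p.1, Φ p.2⟫) :
    (∀ Z : Set X, IsCompact Z → ∀ (g : C(Z, ℝ)) (ε : ℝ), 0 < ε →
        ∃ f : H, ∀ x : Z, |⟪f, Φ x⟫ - g x| ≤ ε) ↔
      ∀ μ : SignedMeasure X, μ.totalVariation.InnerRegular →
        (∃ K : Set X, IsCompact K ∧ μ.totalVariation Kᶜ = 0) → μ ≠ 0 →
        0 < svInt μ (fun x => svInt μ fun y => ⟪Φ x, Φ y⟫) := by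
  have hcont : Continuous Φ := continuous_of_continuous_inner hΦ
  have approx_iff (Z : Set X) (hZ : IsCompact Z) :
      (∀ (g : C(Z, ℝ)) (ε : ℝ), 0 < ε → ∃ f : H, ∀ x : Z, |⟪f, Φ x⟫ - g x| ≤ ε) ↔
        ∀ μ : SignedMeasure X, μ.totalVariation.InnerRegular → μ.totalVariation Zᶜ = 0 →
          (∀ f : H, svInt μ (fun x => ⟪f, Φ x⟫) = 0) → μ = 0 := by
    simpa only [LinearMap.mem_range, exists_exists_eq_and, forall_exists_index,
      forall_apply_eq_imp_iff, coe_innerEval, ContinuousMap.coe_mk] using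
      forall_exists_abs_sub_le_iff_forall_signedMeasure_eq_zero hZ
        (LinearMap.range (innerEval ⟨Φ, hcont⟩))
  have energy_pos_iff (μ : SignedMeasure X) (K : Set X) (hK : IsCompact K)
      (hμK : μ.totalVariation Kᶜ = 0) :
      0 < svInt μ (fun x => svInt μ fun y => ⟪Φ x, Φ y⟫) ↔
        ¬ ∀ f : H, svInt μ (fun x => ⟪f, Φ x⟫) = 0 := by
    rw [not_forall]
    exact svInt_svInt_inner_pos_iff (integrable_of_continuous_of_isCompact hcont hK hμK)
  constructor
  · rintro h μ hμ ⟨K, hK, hμK⟩ hμ0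
    exact (energy_pos_iff μ K hK hμK).2 fun hf => hμ0 ((approx_iff K hK).1 (h K hK) μ hμ hμK hf)
  · intro h Z hZ
    refine (approx_iff Z hZ).2 fun μ hμ hμZ hf => ?_
    by_contra hμ0
    exact (energy_pos_iff μ Z hZ hμZ).1 (h μ hμ ⟨Z, hZ, hμZ⟩ hμ0) hf

/-- Let `X` be a locally compact Hausdorff space and `k` a bounded
continuous symmetric positive definite kernel on `X` with RKHS `H`.  Then `k` is
cc-universal iff `∫∫ k(x,y) dμ(x) dμ(y) > 0` for every nonzero compactly supported finite
signed Radon measure `μ` on `X`. -/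
theorem stmt4
    {X : Type*} [TopologicalSpace X] [T2Space X] [LocallyCompactSpace X]
    [MeasurableSpace X] [BorelSpace X]
    (k : X → X → ℝ) (hkcont : Continuous fun p : X × X => k p.1 p.2)
    (hkbdd : ∃ C : ℝ, ∀ x y : X, |k x y| ≤ C)
    {H : Type*} [NormedAddCommGroup H] [InnerProductSpace ℝ H] [CompleteSpace H]
    (T : H →ₗ[ℝ] (X → ℝ)) (hT : Function.Injective T)
    (Φ : X → H)
    (hk : ∀ x y : X, k x y = ⟪Φ x, Φ y⟫)
    (hrepro : ∀ (f : H) (x : X), T f x = ⟪f, Φ x⟫) :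
    (∀ (Z : Set X), IsCompact Z → ∀ (g : C(Z, ℝ)) (ε : ℝ), 0 < ε →
        ∃ f : H, ∀ x : Z, |T f (x : X) - g x| ≤ ε) ↔
      ∀ μ : MeasureTheory.SignedMeasure X, μ.totalVariation.InnerRegular →
        (∃ K : Set X, IsCompact K ∧ μ.totalVariation Kᶜ = 0) → μ ≠ 0 →
        0 < svInt μ (fun x => svInt μ (fun y => k x y)) := by
  simpa only [hk, hrepro] using stmt4_general Φ (by simpa only [hk] using hkcont)
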